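/- Let A ⊂ ℝⁿ be a symmetric convex Borel set and F ⊂ ℝⁿ a linear subspace of dimension d. Then γ_F(A ∩ F) ≥ γ_n(A), where γ_n is the standard Gaussian measure on ℝⁿ and γ_F the standard Gaussian measure on F. -/

import Mathlib

open MeasureTheory Real Set

/-- The standard Gaussian measure on `ℝᵏ`. -/
noncomputable def stdGaussian (k : ℕ) : Measure (EuclideanSpace ℝ (Fin k)) :=
  volume.withDensity fun x => ENNReal.ofReal ((2 * π) ^ (-(k : ℝ) / 2) * Real.exp (-‖x‖ ^ 2 / 2))
open scoped ENNReal

lemma pl_bm1 (A B S : Set ℝ) (hA : MeasurableSet A) (hB : MeasurableSet B)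
    (hA0 : A.Nonempty) (hB0 : B.Nonempty)
    (hS : ∀ a ∈ A, ∀ b ∈ B, (a + b) / 2 ∈ S) :
    volume A + volume B ≤ 2 * volume S := by
  have hhalf : ∀ (c : ℝ) (K : Set ℝ),
      volume K = 2 * volume (AffineMap.homothety c (1 / 2 : ℝ) '' K) := by
    intro c K
    rw [Measure.addHaar_image_homothety]
    rw [← mul_assoc]
    have : (2 : ℝ≥0∞) * ENNReal.ofReal |(1 / 2 : ℝ) ^ Module.finrank ℝ ℝ| = 1 := by
      rw [← ENNReal.ofReal_ofNat 2, ← ENNReal.ofReal_mul (by norm_num)]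
      simp
    rw [this, one_mul]
  have key : ∀ K L : Set ℝ, K ⊆ A → L ⊆ B → IsCompact K → IsCompact L → K.Nonempty → L.Nonempty →
      volume K + volume L ≤ 2 * volume S := by
    intro K L hKA hLB hK hL hK0 hL0
    obtain ⟨a, haK, ha⟩ := hK.exists_isGreatest hK0
    obtain ⟨b, hbL, hb⟩ := hL.exists_isLeast hL0
    rw [hhalf b K, hhalf a L, ← mul_add]
    gcongr
    have hc : Continuous (AffineMap.homothety a (1 / 2 : ℝ)) := by
      have : ⇑(AffineMap.homothety a (1 / 2 : ℝ)) = fun x => (1/2 : ℝ) * (x - a) + a := by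
        ext x; simp [AffineMap.homothety_apply]
      rw [this]; fun_prop
    rw [← measure_union₀ (hL.image hc).measurableSet.nullMeasurableSet]
    · apply measure_mono
      rintro x (⟨y, hy, rfl⟩ | ⟨y, hy, rfl⟩)
      · have := hS y (hKA hy) b (hLB hbL)
        convert this using 1
        simp [AffineMap.homothety_apply]; ring
      · have := hS a (hKA haK) y (hLB hy)
        convert this using 1
        simp [AffineMap.homothety_apply]; ring
    · apply measure_mono_null (t := {(a + b) / 2})
      · rintro x ⟨⟨y, hy, rfl⟩, ⟨z, hz, hzy⟩⟩
        have h1 := ha hy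
        have h2 := hb hz
        simp [AffineMap.homothety_apply] at hzy ⊢
        linarith
      · simp
  obtain ⟨a, ha⟩ := hA0
  obtain ⟨b, hb⟩ := hB0
  rw [hA.measure_eq_iSup_isCompact, hB.measure_eq_iSup_isCompact]
  simp_rw [iSup_and']
  refine ENNReal.biSup_add_biSup_le' ⟨∅, by simp⟩ ⟨∅, by simp⟩ ?_
  rintro K ⟨hK1, hK2⟩ L ⟨hL1, hL2⟩
  refine le_trans ?_ (key (insert a K) (insert b L) (insert_subset ha hK1) (insert_subset hb hL1)
    (hK2.insert a) (hL2.insert b) (insert_nonempty _ _) (insert_nonempty _ _))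
  gcongr <;> exact subset_insert _ _

lemma pl_one_norm (f g h : ℝ → ℝ) (hf : Measurable f) (hg : Measurable g) (hh : Measurable h)
    (f0 : ∀ x, 0 ≤ f x) (g0 : ∀ x, 0 ≤ g x) (h0 : ∀ x, 0 ≤ h x)
    (f1 : ∀ x, f x ≤ 1) (g1 : ∀ x, g x ≤ 1)
    (fs : ∀ t < 1, ∃ x, t < f x) (gs : ∀ t < 1, ∃ x, t < g x)
    (H : ∀ x y, f x * g y ≤ h ((x + y) / 2) ^ 2) :
    (∫⁻ x, ENNReal.ofReal (f x)) + (∫⁻ x, ENNReal.ofReal (g x)) ≤ 2 * ∫⁻ x, ENNReal.ofReal (h x) := by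
  rw [lintegral_eq_lintegral_meas_lt _ (ae_of_all _ f0) hf.aemeasurable,
    lintegral_eq_lintegral_meas_lt _ (ae_of_all _ g0) hg.aemeasurable,
    lintegral_eq_lintegral_meas_lt _ (ae_of_all _ h0) hh.aemeasurable,
    ← lintegral_const_mul' _ _ (by simp), ← lintegral_add_left]
  · apply setLIntegral_mono' measurableSet_Ioi
    intro t ht
    simp only [mem_Ioi] at ht
    rcases lt_or_ge t 1 with ht1 | ht1
    · apply pl_bm1
      · exact measurableSet_lt measurable_const hf
      · exact measurableSet_lt measurable_const hg
      · exact fs t ht1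
      · exact gs t ht1
      · intro a ha b hb
        simp only [mem_ofPred_eq] at *
        have := H a b
        apply lt_of_pow_lt_pow_left₀ 2 (h0 _)
        nlinarith
    · have e1 : {a | t < f a} = ∅ := by ext x; simpa using (f1 x).trans ht1
      have e2 : {a | t < g a} = ∅ := by ext x; simpa using (g1 x).trans ht1
      simp [e1, e2]
  · apply Antitone.measurable
    intro s t hst
    apply measure_mono
    intro x hx
    exact lt_of_le_of_lt hst hx

lemma ennreal_four_mul (a b e : ℝ≥0∞) (h : a + b ≤ 2 * e) : a * b ≤ e ^ 2 := by
  have h4 : 4 * (a * b) ≤ (a + b) ^ 2 := by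
    rcases le_total a b with hab | hab
    · obtain ⟨k, rfl⟩ := exists_add_of_le hab
      calc 4 * (a * (a + k)) ≤ 4 * (a * (a + k)) + k ^ 2 := le_self_add
        _ = _ := by ring
    · obtain ⟨k, rfl⟩ := exists_add_of_le hab
      calc 4 * ((b + k) * b) ≤ 4 * ((b + k) * b) + k ^ 2 := le_self_add
        _ = _ := by ring
  have h5 : 4 * (a * b) ≤ 4 * e ^ 2 := by
    calc _ ≤ _ := h4
      _ ≤ (2 * e) ^ 2 := by gcongr
      _ = _ := by ring
  exact (ENNReal.mul_le_mul_iff_right (by simp) (by simp)).1 h5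

lemma pl_one_bdd (f g h : ℝ → ℝ≥0∞) (hf : Measurable f) (hg : Measurable g) (hh : Measurable h)
    (N : ℝ≥0∞) (hN : N ≠ ∞) (fN : ∀ x, f x ≤ N) (gN : ∀ x, g x ≤ N)
    (H : ∀ x y, f x * g y ≤ h ((x + y) / 2) ^ 2) :
    (∫⁻ x, f x) * (∫⁻ x, g x) ≤ (∫⁻ x, h x) ^ 2 := by
  set M := ⨆ x, f x with hM
  set m := ⨆ x, g x with hm
  have hfM : ∀ x, f x ≤ M := fun x => le_iSup f x
  have hgm : ∀ x, g x ≤ m := fun x => le_iSup g x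
  have Mt : M ≠ ∞ := ne_top_of_le_ne_top hN (iSup_le fN)
  have mt : m ≠ ∞ := ne_top_of_le_ne_top hN (iSup_le gN)
  rcases eq_or_ne M 0 with M0 | M0
  · have : ∀ x, f x = 0 := fun x => by simpa [M0] using hfM x
    simp [this]
  rcases eq_or_ne m 0 with m0 | m0
  · have : ∀ x, g x = 0 := fun x => by simpa [m0] using hgm x
    simp [this]
  obtain ⟨c, hc⟩ : ∃ c : ℝ≥0∞, c ^ 2 = M * m := by
    refine ⟨(M * m) ^ (1 / 2 : ℝ), ?_⟩
    rw [← ENNReal.rpow_natCast, ← ENNReal.rpow_mul]; norm_num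
  have c0 : c ≠ 0 := by
    rintro rfl
    simp at hc
    tauto
  have ct : c ≠ ∞ := by
    rintro rfl
    have : M * m ≠ ∞ := ENNReal.mul_ne_top Mt mt
    simp at hc
    exact this hc.symm
  have sup : ∀ (u : ℝ → ℝ≥0∞) (K : ℝ≥0∞), K = ⨆ x, u x → K ≠ 0 → K ≠ ∞ →
      ∀ t : ℝ, t < 1 → ∃ x, t < (u x / K).toReal := by
    intro u K hK K0 Kt t ht
    have h1 : ENNReal.ofReal t * K < ⨆ x, u x := by
      rw [← hK]
      calc _ < 1 * K := by
            apply ENNReal.mul_lt_mul_left K0 Kt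
            simpa using ht
        _ = K := one_mul K
    obtain ⟨x, hx⟩ := lt_iSup_iff.1 h1
    refine ⟨x, ?_⟩
    have hux : u x ≤ K := hK ▸ le_iSup u x
    have : ENNReal.ofReal t < u x / K := by
      rw [ENNReal.lt_div_iff_mul_lt (Or.inl K0) (Or.inl Kt)]
      exact hx
    by_contra hcon
    have h2 := ENNReal.ofReal_le_ofReal (not_lt.1 hcon)
    rw [ENNReal.ofReal_toReal (ENNReal.div_ne_top (ne_top_of_le_ne_top Kt hux) K0)] at h2
    exact absurd this (not_lt.2 h2)
  have hfd : ∀ x, f x / M ≤ 1 := fun x => ENNReal.div_le_of_le_mul (by simpa using hfM x)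
  have hgd : ∀ x, g x / m ≤ 1 := fun x => ENNReal.div_le_of_le_mul (by simpa using hgm x)
  have hhd : ∀ x, min (h x / c) 1 ≤ 1 := fun x => min_le_right _ _
  have tr : ∀ {z : ℝ≥0∞}, z ≤ 1 → z ≠ ∞ := fun hz => ne_top_of_le_ne_top ENNReal.one_ne_top hz
  have main := pl_one_norm (fun x => (f x / M).toReal) (fun x => (g x / m).toReal)
    (fun x => (min (h x / c) 1).toReal) (by fun_prop) (by fun_prop) (by fun_prop)
    (fun _ => ENNReal.toReal_nonneg) (fun _ => ENNReal.toReal_nonneg)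
    (fun _ => ENNReal.toReal_nonneg)
    (fun x => ENNReal.toReal_le_of_le_ofReal zero_le_one (by simpa using hfd x))
    (fun x => ENNReal.toReal_le_of_le_ofReal zero_le_one (by simpa using hgd x))
    (sup f M hM M0 Mt) (sup g m hm m0 mt) (by
      intro x y
      rw [← ENNReal.toReal_mul, ← ENNReal.toReal_pow]
      apply ENNReal.toReal_mono (ENNReal.pow_ne_top (tr (hhd _)))
      rcases le_total (h ((x + y) / 2) / c) 1 with h1 | h1
      · rw [min_eq_left h1]
        have e1 : f x / M * (g y / m) = (f x * g y) / c ^ 2 := by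
          rw [hc, div_eq_mul_inv, div_eq_mul_inv, div_eq_mul_inv,
            ENNReal.mul_inv (Or.inl M0) (Or.inl Mt)]; ring
        have e2 : (h ((x + y) / 2) / c) ^ 2 = h ((x + y) / 2) ^ 2 / c ^ 2 := by
          rw [ENNReal.div_eq_inv_mul, ENNReal.div_eq_inv_mul, mul_pow, ENNReal.inv_pow]
        rw [e1, e2]
        gcongr
        exact H x y
      · rw [min_eq_right h1, one_pow]
        exact mul_le_one' (hfd x) (hgd y))
  simp only [ENNReal.ofReal_toReal (tr (hfd _)), ENNReal.ofReal_toReal (tr (hgd _)),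
    ENNReal.ofReal_toReal (tr (hhd _))] at main
  have main2 := ennreal_four_mul _ _ _ main
  have i1 : ∫⁻ x, f x = M * ∫⁻ x, f x / M := by
    rw [← lintegral_const_mul' _ _ Mt]
    simp_rw [ENNReal.mul_div_cancel M0 Mt]
  have i2 : ∫⁻ x, g x = m * ∫⁻ x, g x / m := by
    rw [← lintegral_const_mul' _ _ mt]
    simp_rw [ENNReal.mul_div_cancel m0 mt]
  have i3 : ∫⁻ x, h x = c * ∫⁻ x, h x / c := by
    rw [← lintegral_const_mul' _ _ ct]
    simp_rw [ENNReal.mul_div_cancel c0 ct]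
  rw [i1, i2, i3, mul_pow, hc]
  calc _ = M * m * ((∫⁻ x, f x / M) * ∫⁻ x, g x / m) := by ring
    _ ≤ M * m * (∫⁻ x, min (h x / c) 1) ^ 2 := by gcongr
    _ ≤ _ := by gcongr; exact min_le_left _ _

/-- Prékopa–Leindler (midpoint version) as a property of a measure. -/
def PLProp {E : Type*} [AddCommGroup E] [Module ℝ E] [MeasurableSpace E] (μ : Measure E) : Prop :=
  ∀ f g h : E → ℝ≥0∞, Measurable f → Measurable g → Measurable h →
    (∀ x y, f x * g y ≤ h ((2 : ℝ)⁻¹ • (x + y)) ^ 2) →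
    (∫⁻ x, f x ∂μ) * (∫⁻ x, g x ∂μ) ≤ (∫⁻ x, h x ∂μ) ^ 2

lemma plprop_real : PLProp (volume : Measure ℝ) := by
  intro f g h hf hg hh H
  have tr : ∀ u : ℝ → ℝ≥0∞, Measurable u →
      ∫⁻ x, u x = ⨆ n : ℕ, ∫⁻ x, min (u x) n := by
    intro u hu
    rw [← lintegral_iSup]
    · congr 1
      ext x
      apply le_antisymm
      · have : u x = min (u x) (⨆ n : ℕ, (n : ℝ≥0∞)) := by simp [ENNReal.iSup_natCast]
        conv_lhs => rw [this]
        rw [inf_iSup_eq]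
      · exact iSup_le fun n => min_le_left _ _
    · intro n; fun_prop
    · intro a b hab x
      dsimp only
      gcongr
  rw [tr f hf, tr g hg]
  simp_rw [ENNReal.iSup_mul, ENNReal.mul_iSup]
  apply iSup_le
  intro n
  apply iSup_le
  intro k
  apply pl_one_bdd _ _ h (by fun_prop) (by fun_prop) hh (max n k) (by simp)
    (fun x => (min_le_right _ _).trans (le_max_left _ _))
    (fun x => (min_le_right _ _).trans (le_max_right _ _))
  intro x y
  calc _ ≤ f x * g y := by gcongr <;> exact min_le_left _ _
    _ ≤ _ := H x y
    _ = _ := by simp only [smul_eq_mul]; congr 2; ring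

lemma PLProp.prod {E F : Type*} [AddCommGroup E] [Module ℝ E] [MeasurableSpace E]
    [AddCommGroup F] [Module ℝ F] [MeasurableSpace F] {μ : Measure E} {ν : Measure F}
    [SFinite μ] [SFinite ν]
    (hμ : PLProp μ) (hν : PLProp ν) : PLProp (μ.prod ν) := by
  intro f g h hf hg hh H
  rw [lintegral_prod _ hf.aemeasurable, lintegral_prod _ hg.aemeasurable,
    lintegral_prod _ hh.aemeasurable]
  apply hμ _ _ _ hf.lintegral_prod_right' hg.lintegral_prod_right' hh.lintegral_prod_right'
  intro x y
  apply hν _ _ _ (by fun_prop) (by fun_prop) (by fun_prop)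
  intro u v
  exact H (x, u) (y, v)

lemma PLProp.map {E F : Type*} [AddCommGroup E] [Module ℝ E] [MeasurableSpace E]
    [AddCommGroup F] [Module ℝ F] [MeasurableSpace F] {μ : Measure E} {ν : Measure F}
    (hμ : PLProp μ) (L : E → F) (hL : MeasurePreserving L μ ν)
    (hl : ∀ x y, L ((2 : ℝ)⁻¹ • (x + y)) = (2 : ℝ)⁻¹ • (L x + L y)) : PLProp ν := by
  intro f g h hf hg hh H
  rw [← hL.lintegral_comp hf, ← hL.lintegral_comp hg, ← hL.lintegral_comp hh]
  apply hμ _ _ _ (hf.comp hL.measurable) (hg.comp hL.measurable) (hh.comp hL.measurable)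
  intro x y
  simp only [Function.comp, hl]
  exact H _ _

lemma plprop_pi (n : ℕ) : PLProp (volume : Measure (Fin n → ℝ)) := by
  induction n with
  | zero =>
    intro f g h hf hg hh H
    rw [Measure.volume_pi_eq_dirac 0, lintegral_dirac, lintegral_dirac, lintegral_dirac]
    convert H 0 0
  | succ n ih =>
    have := plprop_real.prod ih
    refine this.map _ (volume_preserving_piFinSuccAbove (fun _ : Fin (n + 1) => ℝ) 0).symm ?_
    intro x y
    ext i
    refine Fin.cases ?_ (fun i => ?_) i <;> simp [MeasurableEquiv.piFinSuccAbove, mul_add]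

lemma plprop_euclidean (n : ℕ) : PLProp (volume : Measure (EuclideanSpace ℝ (Fin n))) :=
  (plprop_pi n).map _ (PiLp.volume_preserving_toLp (Fin n)) (fun x y => by simp)

/-- Unnormalised-by-type Gaussian density with exponent `k`. -/
noncomputable def gdens {E : Type*} [NormedAddCommGroup E] (k : ℕ) (x : E) : ℝ≥0∞ :=
  ENNReal.ofReal ((2 * π) ^ (-(k : ℝ) / 2) * Real.exp (-‖x‖ ^ 2 / 2))

lemma measurable_gdens {E : Type*} [NormedAddCommGroup E] [MeasurableSpace E] [BorelSpace E]
    (k : ℕ) : Measurable (gdens k : E → ℝ≥0∞) := by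
  unfold gdens
  have : Continuous fun x : E => (2 * π) ^ (-(k : ℝ) / 2) * Real.exp (-‖x‖ ^ 2 / 2) := by fun_prop
  exact this.measurable.ennreal_ofReal

lemma lintegral_gdens (E : Type*) [NormedAddCommGroup E] [InnerProductSpace ℝ E]
    [FiniteDimensional ℝ E] [MeasurableSpace E] [BorelSpace E] :
    ∫⁻ x : E, gdens (Module.finrank ℝ E) x = 1 := by
  have h1 := GaussianFourier.integral_rexp_neg_mul_sq_norm (V := E) (b := 1 / 2) (by norm_num)
  have e : ∀ x : E, -(1 / 2 : ℝ) * ‖x‖ ^ 2 = -‖x‖ ^ 2 / 2 := fun x => by ring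
  simp_rw [e] at h1
  have hp : π / (1 / 2) = 2 * π := by ring
  rw [hp] at h1
  have hint : Integrable fun x : E => Real.exp (-‖x‖ ^ 2 / 2) := by
    apply Integrable.of_integral_ne_zero
    rw [h1]; positivity
  unfold gdens
  rw [← ofReal_integral_eq_lintegral_ofReal (hint.const_mul _) (ae_of_all _ fun x => by positivity),
    integral_const_mul, h1, ← Real.rpow_add (by positivity)]
  rw [neg_div, neg_add_cancel]
  simp

lemma gdens_midpoint {E : Type*} [NormedAddCommGroup E] [InnerProductSpace ℝ E] (k : ℕ) (x y : E) :
    gdens k x * gdens k y ≤ gdens k ((2 : ℝ)⁻¹ • (x + y)) ^ 2 := by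
  unfold gdens
  rw [← ENNReal.ofReal_mul (by positivity), ← ENNReal.ofReal_pow (by positivity)]
  apply ENNReal.ofReal_le_ofReal
  rw [mul_mul_mul_comm, mul_pow, ← sq, ← Real.exp_add, ← Real.exp_nat_mul]
  gcongr
  have h := parallelogram_law_with_norm ℝ x y
  rw [norm_smul, mul_pow]
  norm_num
  nlinarith [sq_nonneg ‖x - y‖]

lemma section_le {d : ℕ} {V : Type*} [AddCommGroup V]
    [Module ℝ V] (B : Set (EuclideanSpace ℝ (Fin d) × V)) (hconv : Convex ℝ B)
    (hsymm : ∀ p ∈ B, -p ∈ B) (hmeas : ∀ y : V, MeasurableSet {x | (x, y) ∈ B}) (y : V) :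
    ∫⁻ x, {x | (x, y) ∈ B}.indicator (gdens d) x ≤
      ∫⁻ x, {x | (x, (0 : V)) ∈ B}.indicator (gdens d) x := by
  have hm := measurable_gdens (E := EuclideanSpace ℝ (Fin d)) d
  have key := plprop_euclidean d ({x | (x, y) ∈ B}.indicator (gdens d))
    ({x | (x, -y) ∈ B}.indicator (gdens d)) ({x | (x, (0 : V)) ∈ B}.indicator (gdens d))
    (hm.indicator (hmeas _)) (hm.indicator (hmeas _)) (hm.indicator (hmeas _)) (by
      intro u v
      by_cases hu : (u, y) ∈ B
      · by_cases hv : (v, -y) ∈ B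
        · have : ((2 : ℝ)⁻¹ • (u + v), (0 : V)) ∈ B := by
            have := hconv hu hv (a := 2⁻¹) (b := 2⁻¹) (by norm_num) (by norm_num) (by norm_num)
            convert this using 1
            simp
          rw [indicator_of_mem (by exact hu), indicator_of_mem (by exact hv),
            indicator_of_mem (by exact this)]
          exact gdens_midpoint d u v
        · rw [indicator_of_notMem (s := {x | (x, -y) ∈ B}) (by exact hv)]; simp
      · rw [indicator_of_notMem (s := {x | (x, y) ∈ B}) (by exact hu)]; simp)
  have e : ∫⁻ x, {x | (x, -y) ∈ B}.indicator (gdens d) x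
      = ∫⁻ x, {x | (x, y) ∈ B}.indicator (gdens d) x := by
    rw [← lintegral_neg_eq_self]
    congr 1
    ext x
    have : (-x, -y) ∈ B ↔ (x, y) ∈ B :=
      ⟨fun h => by simpa using hsymm _ h, fun h => by simpa using hsymm _ h⟩
    by_cases h : (x, y) ∈ B
    · rw [indicator_of_mem (by exact this.2 h), indicator_of_mem (by exact h)]
      simp [gdens]
    · rw [indicator_of_notMem (by exact fun h' => h (this.1 h')), indicator_of_notMem (by exact h)]
  rw [e, ← sq] at key
  exact (ENNReal.pow_le_pow_left_iff (by norm_num)).1 key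

/-- A symmetric convex Borel set has Gaussian measure which only increases when restricting to
(the standard Gaussian of) a linear subspace, here realized as the range of a linear isometry
`J : ℝᵈ → ℝⁿ`. -/
theorem stmt9 (n d : ℕ)
    (J : EuclideanSpace ℝ (Fin d) →ₗᵢ[ℝ] EuclideanSpace ℝ (Fin n))
    (A : Set (EuclideanSpace ℝ (Fin n)))
    (hA : MeasurableSet A) (hAconv : Convex ℝ A) (hAsymm : ∀ x ∈ A, -x ∈ A) :
    stdGaussian n A ≤ stdGaussian d (J ⁻¹' A) := by
  let V := (LinearMap.range J.toLinearMap)ᗮ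
  have hort : ∀ (x : EuclideanSpace ℝ (Fin d)) (y : V), inner ℝ (J x) (y : EuclideanSpace ℝ (Fin n)) = 0 :=
    fun x y => y.2 _ ⟨x, rfl⟩
  have hdim : d + Module.finrank ℝ V = n := by
    have h1 := (LinearMap.range J.toLinearMap).finrank_add_finrank_orthogonal
    rw [LinearMap.finrank_range_of_inj J.injective] at h1
    simpa using h1
  let T : WithLp 2 (EuclideanSpace ℝ (Fin d) × V) →ₗᵢ[ℝ] EuclideanSpace ℝ (Fin n) :=
    { toLinearMap := (J.toLinearMap.coprod V.subtype) ∘ₗ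
        (WithLp.linearEquiv 2 ℝ (EuclideanSpace ℝ (Fin d) × V)).toLinearMap
      norm_map' := by
        intro p
        have h2 : ‖J p.fst + (p.snd : EuclideanSpace ℝ (Fin n))‖ ^ 2 = ‖p‖ ^ 2 := by
          rw [WithLp.prod_norm_sq_eq_of_L2, sq, norm_add_sq_eq_norm_sq_add_norm_sq_of_inner_eq_zero _ _ (hort _ _)]
          simp [sq]
        exact (sq_eq_sq₀ (norm_nonneg _) (norm_nonneg _)).1 h2 }
  have hT : ∀ x y, T (WithLp.toLp 2 (x, y)) = J x + y := fun x y => rfl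
  let e := T.toLinearIsometryEquiv (by
    rw [(WithLp.linearEquiv 2 ℝ (EuclideanSpace ℝ (Fin d) × V)).finrank_eq, Module.finrank_prod]
    simpa using hdim)
  have he : ∀ x y, e (WithLp.toLp 2 (x, y)) = J x + y := fun x y => rfl
  have hmp : MeasurePreserving (fun p : EuclideanSpace ℝ (Fin d) × V => J p.1 + p.2) :=
    e.measurePreserving.comp (WithLp.volume_preserving_toLp (EuclideanSpace ℝ (Fin d)) V)
  let B : Set (EuclideanSpace ℝ (Fin d) × V) := {p | J p.1 + p.2 ∈ A}
  have hBm : MeasurableSet B := hmp.measurable hA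
  have hsplit : ∀ (x : EuclideanSpace ℝ (Fin d)) (y : V),
      gdens n (J x + (y : EuclideanSpace ℝ (Fin n))) = gdens (Module.finrank ℝ V) y * gdens d x := by
    intro x y
    unfold gdens
    rw [← ENNReal.ofReal_mul (by positivity), mul_mul_mul_comm, ← Real.exp_add,
      ← Real.rpow_add (by positivity), sq,
      norm_add_sq_eq_norm_sq_add_norm_sq_of_inner_eq_zero _ _ (hort _ _)]
    have hdim' : (n : ℝ) = d + Module.finrank ℝ V := by exact_mod_cast hdim.symm
    rw [hdim']
    simp only [LinearIsometry.norm_map, Submodule.coe_norm]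
    congr 3
    · ring
    · ring
  have hB : ∀ (x : EuclideanSpace ℝ (Fin d)) (y : V), A.indicator (gdens n) (J x + y) =
      gdens (Module.finrank ℝ V) y * {x | (x, y) ∈ B}.indicator (gdens d) x := by
    intro x y
    by_cases h : (x, y) ∈ B
    · rw [indicator_of_mem (by exact h), indicator_of_mem (by exact h), hsplit]
    · rw [indicator_of_notMem (by exact h), indicator_of_notMem (by exact h), mul_zero]
  have hmsec : ∀ y : V, MeasurableSet {x | (x, y) ∈ B} := fun y => measurable_prodMk_right hBm
  have hgm := (measurable_gdens (E := EuclideanSpace ℝ (Fin n)) n).indicator hA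
  have hn : stdGaussian n A = ∫⁻ y : V, gdens (Module.finrank ℝ V) y *
      ∫⁻ x, {x | (x, y) ∈ B}.indicator (gdens d) x := by
    rw [stdGaussian, withDensity_apply _ hA, ← lintegral_indicator hA]
    change ∫⁻ z, A.indicator (gdens n) z = _
    rw [← hmp.lintegral_comp hgm, Measure.volume_eq_prod,
      lintegral_prod_symm _ (by exact (hgm.comp hmp.measurable).aemeasurable)]
    congr 1
    ext y
    simp_rw [hB]
    rw [lintegral_const_mul' _ _ (by simp [gdens])]
  have hd : stdGaussian d (J ⁻¹' A) = ∫⁻ x, {x | (x, (0 : V)) ∈ B}.indicator (gdens d) x := by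
    have : J ⁻¹' A = {x | (x, (0 : V)) ∈ B} := by ext x; simp [B]
    rw [stdGaussian, withDensity_apply _ (J.continuous.measurable hA),
      ← lintegral_indicator (J.continuous.measurable hA), this]
    rfl
  rw [hn, hd]
  calc _ ≤ ∫⁻ y : V, gdens (Module.finrank ℝ V) y *
      ∫⁻ x, {x | (x, (0 : V)) ∈ B}.indicator (gdens d) x := by
        refine lintegral_mono fun y => mul_le_mul_right ?_ _
        refine section_le B ?_ ?_ hmsec y
        · have := hAconv.linear_preimage (J.toLinearMap.coprod V.subtype)
          exact this
        · intro p hp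
          have := hAsymm _ hp
          simp only [B, mem_ofPred_eq, Prod.fst_neg, Prod.snd_neg, map_neg, Submodule.coe_neg]
          rwa [← neg_add]
    _ = _ := by
      rw [lintegral_mul_const _ (measurable_gdens _), lintegral_gdens, one_mul]
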